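/- Let C and D be abelian categories with enough injectives, let π : C ⥤ D be an exact functor, and let u : D ⥤ C be a right adjoint of π which is fully faithful and exact. Fix a natural number d. If every object of C admits an injective resolution of length at most d (i.e., an exact sequence 0 → M → I⁰ → I¹ → ⋯ → I^d → 0 with every I^j injective), then every object of D admits an injective resolution of length at most d. -/

import Mathlib

open CategoryTheory Limits

/-- `M` admits an injective resolution of length at most `d`, i.e. an exact sequence
`0 → M → I⁰ → I¹ → ⋯ → I^d → 0` with every `I^j` injective.  We encode the sequence by
extending it by zero objects in degrees `> d`. -/
def HasInjectiveResolutionOfLength {C : Type*} [Category C] [Abelian C] (d : ℕ) (M : C) :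
    Prop :=
  ∃ (I : ℕ → C) (ι : M ⟶ I 0) (δ : ∀ j : ℕ, I j ⟶ I (j + 1))
    (w0 : ι ≫ δ 0 = 0) (w : ∀ j : ℕ, δ j ≫ δ (j + 1) = 0),
    (∀ j : ℕ, j ≤ d → Injective (I j)) ∧
    (∀ j : ℕ, d < j → IsZero (I j)) ∧
    Mono ι ∧
    (ShortComplex.mk ι (δ 0) w0).Exact ∧
    (∀ j : ℕ, (ShortComplex.mk (δ j) (δ (j + 1)) (w j)).Exact)

/-!
In an abelian category with enough injectives, an object `M` has an injective resolution of length
at most `d` if and only if `Ext^i(-, M)` vanishes for all `i > d`. Since `π` is exact, its right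
adjoint `u` preserves injective objects, and a fully faithful exact functor preserving injective
objects induces isomorphisms `Ext^i(Y, N) ≅ Ext^i(u Y, u N)`; hence the vanishing of `Ext^i(-, u N)`
forces that of `Ext^i(-, N)`.
-/

section Exact

variable {C : Type*} [Category C] [HasZeroMorphisms C] {W X Y Z : C}

theorem exact_epi_comp_iff (p : W ⟶ X) [Epi p] {f : X ⟶ Y} {g : Y ⟶ Z} (w : f ≫ g = 0) :
    (ShortComplex.mk (p ≫ f) g (by rw [Category.assoc, w, comp_zero])).Exact ↔
      (ShortComplex.mk f g w).Exact := by
  let φ : ShortComplex.mk (p ≫ f) g (by rw [Category.assoc, w, comp_zero]) ⟶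
      ShortComplex.mk f g w := { τ₁ := p, τ₂ := 𝟙 Y, τ₃ := 𝟙 Z }
  have : Epi φ.τ₁ := ‹Epi p›
  have : IsIso φ.τ₂ := inferInstanceAs (IsIso (𝟙 Y))
  have : Mono φ.τ₃ := inferInstanceAs (Mono (𝟙 Z))
  exact ShortComplex.exact_iff_of_epi_of_isIso_of_mono φ

theorem exact_comp_mono_iff {f : W ⟶ X} {g : X ⟶ Y} (i : Y ⟶ Z) [Mono i] (w : f ≫ g = 0) :
    (ShortComplex.mk f (g ≫ i) (by rw [reassoc_of% w, zero_comp])).Exact ↔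
      (ShortComplex.mk f g w).Exact := by
  let φ : ShortComplex.mk f g w ⟶
      ShortComplex.mk f (g ≫ i) (by rw [reassoc_of% w, zero_comp]) :=
    { τ₁ := 𝟙 W, τ₂ := 𝟙 X, τ₃ := i }
  have : Epi φ.τ₁ := inferInstanceAs (Epi (𝟙 W))
  have : IsIso φ.τ₂ := inferInstanceAs (IsIso (𝟙 X))
  have : Mono φ.τ₃ := ‹Mono i›
  exact (ShortComplex.exact_iff_of_epi_of_isIso_of_mono φ).symm

end Exact

section InjectiveResolution

variable {C : Type*} [Category C] [Abelian C] {d : ℕ} {M J : C}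

theorem shortExact_cokernel (f : M ⟶ J) [Mono f] :
    (ShortComplex.mk f (cokernel.π f) (cokernel.condition f)).ShortExact where
  exact := ShortComplex.exact_cokernel f

theorem HasInjectiveResolutionOfLength.injective (h : HasInjectiveResolutionOfLength 0 M) :
    Injective M := by
  obtain ⟨I, ι, δ, w₀, -, hI, hI₀, _, exact_ι, -⟩ := h
  have : Epi ι := exact_ι.epi_f_iff.2 ((hI₀ 1 one_pos).eq_of_tgt _ _)
  have : IsIso ι := isIso_of_mono_of_epi ι
  exact Injective.of_iso (asIso ι).symm (hI 0 le_rfl)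

open ZeroObject in
theorem hasInjectiveResolutionOfLength_of_injective [Injective M] :
    HasInjectiveResolutionOfLength d M := by
  refine ⟨fun | 0 => M | _ + 1 => 0, 𝟙 M, fun _ => 0, comp_zero, fun _ => comp_zero,
    ?_, ?_, inferInstanceAs (Mono (𝟙 M)), ?_, fun _ => ?_⟩
  · rintro (_ | j) -
    · assumption
    · exact (isZero_zero C).injective
  · rintro (_ | j) hj
    · exact absurd hj (Nat.not_lt_zero d)
    · exact isZero_zero C
  · exact (ShortComplex.exact_iff_epi _ rfl).2 (inferInstanceAs (Epi (𝟙 M)))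
  · exact ShortComplex.exact_of_isZero_X₂ _ (isZero_zero C)

theorem HasInjectiveResolutionOfLength.exists_mono_cokernel
    (h : HasInjectiveResolutionOfLength (d + 1) M) :
    ∃ (J : C) (f : M ⟶ J), Injective J ∧ Mono f ∧
      HasInjectiveResolutionOfLength d (cokernel f) := by
  obtain ⟨I, ι, δ, w₀, w, hI, hI₀, hι, exact_ι, exact_δ⟩ := h
  have w₁ : cokernel.desc ι (δ 0) w₀ ≫ δ 1 = 0 := by
    rw [← cancel_epi (cokernel.π ι), cokernel.π_desc_assoc, w 0, comp_zero]
  have exact_desc : (ShortComplex.mk (cokernel.desc ι (δ 0) w₀) (δ 1) w₁).Exact :=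
    (exact_epi_comp_iff (cokernel.π ι) w₁).1 (by simpa only [cokernel.π_desc] using exact_δ 0)
  exact ⟨I 0, ι, hI 0 (Nat.zero_le _), hι, fun j => I (j + 1), cokernel.desc ι (δ 0) w₀,
    fun j => δ (j + 1), w₁, fun j => w (j + 1), fun j hj => hI (j + 1) (Nat.succ_le_succ hj),
    fun j hj => hI₀ (j + 1) (Nat.succ_lt_succ hj), exact_ι.mono_cokernelDesc, exact_desc,
    fun j => exact_δ (j + 1)⟩

theorem HasInjectiveResolutionOfLength.of_cokernel [Injective J] (f : M ⟶ J) [Mono f]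
    (h : HasInjectiveResolutionOfLength d (cokernel f)) :
    HasInjectiveResolutionOfLength (d + 1) M := by
  obtain ⟨I, ι, δ, w₀, w, hI, hI₀, _, exact_ι, exact_δ⟩ := h
  have w₁ : f ≫ cokernel.π f ≫ ι = 0 := by rw [cokernel.condition_assoc, zero_comp]
  have w₂ : (cokernel.π f ≫ ι) ≫ δ 0 = 0 := by rw [Category.assoc, w₀, comp_zero]
  refine ⟨fun | 0 => J | j + 1 => I j, f, fun | 0 => cokernel.π f ≫ ι | j + 1 => δ j,
    w₁, fun | 0 => w₂ | j + 1 => w j, ?_, ?_, ‹Mono f›, ?_, ?_⟩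
  · rintro (_ | j) hj
    · assumption
    · exact hI j (Nat.le_of_succ_le_succ hj)
  · rintro (_ | j) hj
    · exact absurd hj (Nat.not_lt_zero _)
    · exact hI₀ j (Nat.lt_of_succ_lt_succ hj)
  · exact (exact_comp_mono_iff ι (cokernel.condition f)).2 (ShortComplex.exact_cokernel f)
  · rintro (_ | j)
    · exact (exact_epi_comp_iff (cokernel.π f) w₀).2 exact_ι
    · exact exact_δ j

theorem HasInjectiveResolutionOfLength.hasInjectiveDimensionLE
    (h : HasInjectiveResolutionOfLength d M) : HasInjectiveDimensionLE M d := by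
  induction d generalizing M with
  | zero => exact injective_iff_hasInjectiveDimensionLT_one.1 h.injective
  | succ d ih =>
    obtain ⟨J, f, hJ, _, hf⟩ := h.exists_mono_cokernel
    exact ((shortExact_cokernel f).hasInjectiveDimensionLT_X₃_iff d hJ).1 (ih hf)

theorem hasInjectiveResolutionOfLength_of_hasInjectiveDimensionLE [EnoughInjectives C]
    (h : HasInjectiveDimensionLE M d) : HasInjectiveResolutionOfLength d M := by
  induction d generalizing M with
  | zero =>
    have : Injective M := injective_iff_hasInjectiveDimensionLT_one.2 h
    exact hasInjectiveResolutionOfLength_of_injective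
  | succ d ih =>
    have : HasInjectiveDimensionLE (cokernel (Injective.ι M)) d :=
      ((shortExact_cokernel (Injective.ι M)).hasInjectiveDimensionLT_X₃_iff d inferInstance).2 h
    exact .of_cokernel (Injective.ι M) (ih this)

end InjectiveResolution

section FullyFaithful

variable {C D : Type*} [Category C] [Category D] [Abelian C] [Abelian D] [EnoughInjectives D]
  (u : D ⥤ C) [u.Full] [u.Faithful] [u.PreservesInjectiveObjects]
  [PreservesFiniteLimits u] [PreservesFiniteColimits u]

theorem hasInjectiveDimensionLT_of_hasInjectiveDimensionLT_obj {N : D} {n : ℕ}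
    (h : HasInjectiveDimensionLT (u.obj N) n) : HasInjectiveDimensionLT N n := by
  let := HasExt.standard C
  let := HasExt.standard D
  have : u.Additive := Functor.additive_of_preserves_binary_products u
  rw [hasInjectiveDimensionLT_iff]
  intro i hi Y e
  apply (u.mapExt_bijective_of_preservesInjectiveObjects Y N i).injective
  rw [map_zero]
  exact Abelian.Ext.eq_zero_of_hasInjectiveDimensionLT _ n hi

theorem injDim_le_of_exact_fully_faithful_right_adjoint_general (d : ℕ) (N : D)
    (h : HasInjectiveResolutionOfLength d (u.obj N)) : HasInjectiveResolutionOfLength d N :=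
  hasInjectiveResolutionOfLength_of_hasInjectiveDimensionLE
    (hasInjectiveDimensionLT_of_hasInjectiveDimensionLT_obj u h.hasInjectiveDimensionLE)

end FullyFaithful

/-- If `π : C ⥤ D` is exact with fully faithful exact right adjoint `u : D ⥤ C`, and every
object of `C` has an injective resolution of length at most `d`, then so does every object
of `D`. -/
theorem injDim_le_of_exact_fully_faithful_right_adjoint
    {C D : Type*} [Category C] [Category D] [Abelian C] [Abelian D]
    [EnoughInjectives C] [EnoughInjectives D]
    (π : C ⥤ D) (u : D ⥤ C) (adj : π ⊣ u) [u.Full] [u.Faithful]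
    [PreservesFiniteLimits π] [PreservesFiniteColimits π]
    [PreservesFiniteLimits u] [PreservesFiniteColimits u]
    (d : ℕ) (h : ∀ M : C, HasInjectiveResolutionOfLength d M) :
    ∀ N : D, HasInjectiveResolutionOfLength d N := by
  have : u.PreservesInjectiveObjects :=
    Functor.preservesInjectiveObjects_of_adjunction_of_preservesMonomorphisms adj
  exact fun N => injDim_le_of_exact_fully_faithful_right_adjoint_general u d N (h (u.obj N))
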